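/- Let the compact set A and lower semicontinuous kernel K satisfy assumptions (A1)-(A4). For each N ≥ 2 choose a configuration ω_N ∈ A^N and let ν_N be the probability measure assigning mass 1/N to each point of ω_N (counting multiplicities). Then the sequence {ω_N} is asymptotically optimal for the polarization problem, meaning lim_{N→∞} P(ω_N)/𝒫(A,N) = 1, if and only if the measures ν_N converge weakly to μ_eq as N → ∞. -/

import Mathlib

open MeasureTheory Filter Topology BoundedContinuousFunction NNReal ENNReal

noncomputable section

/-- The potential of a measure `μ` with respect to the kernel `K x y = f (nndist x y)`. -/
def potential {t : ℕ} (f : ℝ≥0 → ℝ≥0∞) (μ : Measure (EuclideanSpace ℝ (Fin t)))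
    (x : EuclideanSpace ℝ (Fin t)) : ℝ≥0∞ :=
  ∫⁻ y, f (nndist x y) ∂μ

/-- The energy `I[μ] = ∫∫ K(x,y) dμ(x) dμ(y)`. -/
def energy {t : ℕ} (f : ℝ≥0 → ℝ≥0∞) (μ : Measure (EuclideanSpace ℝ (Fin t))) : ℝ≥0∞ :=
  ∫⁻ x, potential f μ x ∂μ

/-- The normalized discrete potential `(1/N) ∑_{y ∈ ω} K(x,y)` of a configuration. -/
def discretePotential {t : ℕ} (f : ℝ≥0 → ℝ≥0∞) {N : ℕ}
    (ω : Fin N → EuclideanSpace ℝ (Fin t)) (x : EuclideanSpace ℝ (Fin t)) : ℝ≥0∞ :=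
  (N : ℝ≥0∞)⁻¹ * ∑ i, f (nndist x (ω i))

/-- The polarization `P(ω) = min_{x ∈ A} (1/N) ∑_{y ∈ ω} K(x,y)` of a configuration. -/
def polarization {t : ℕ} (f : ℝ≥0 → ℝ≥0∞) (A : Set (EuclideanSpace ℝ (Fin t))) {N : ℕ}
    (ω : Fin N → EuclideanSpace ℝ (Fin t)) : ℝ≥0∞ :=
  ⨅ x ∈ A, discretePotential f ω x

/-- The optimal `N`-point polarization `𝒫(A,N)`. -/
def maxPolarization {t : ℕ} (f : ℝ≥0 → ℝ≥0∞) (A : Set (EuclideanSpace ℝ (Fin t)))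
    (N : ℕ) : ℝ≥0∞ :=
  ⨆ (ω : Fin N → EuclideanSpace ℝ (Fin t)) (_ : ∀ i, ω i ∈ A), polarization f A ω

/-- The normalized counting measure of a configuration. -/
def countingMeasure {t : ℕ} {N : ℕ} (ω : Fin N → EuclideanSpace ℝ (Fin t)) :
    Measure (EuclideanSpace ℝ (Fin t)) :=
  (N : ℝ≥0∞)⁻¹ • ∑ i, Measure.dirac (ω i)

/-- Weak convergence of a sequence of measures: integrals of every bounded continuous
function converge. -/
def WeaklyTendsto {t : ℕ} (ν : ℕ → Measure (EuclideanSpace ℝ (Fin t)))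
    (μ : Measure (EuclideanSpace ℝ (Fin t))) : Prop :=
  ∀ g : EuclideanSpace ℝ (Fin t) →ᵇ ℝ,
    Tendsto (fun N => ∫ x, g x ∂(ν N)) atTop (𝓝 (∫ x, g x ∂μ))

section WeakTopology

variable {Ω : Type*} [TopologicalSpace Ω] [TopologicalSpace.PseudoMetrizableSpace Ω]
  [TopologicalSpace.SeparableSpace Ω] [MeasurableSpace Ω] [BorelSpace Ω]

/-- Integration of a lower semicontinuous function is lower semicontinuous for the topology of
convergence in distribution: case of a finite-valued integrand, by the layer cake formula. -/
lemma lowerSemicontinuous_lintegral_ofReal {h : Ω → ℝ} (h_nonneg : 0 ≤ h)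
    (h_lsc : LowerSemicontinuous h) :
    LowerSemicontinuous fun μ : ProbabilityMeasure Ω =>
      ∫⁻ x, ENNReal.ofReal (h x) ∂(μ : Measure Ω) := by
  rw [lowerSemicontinuous_iff_le_liminf]
  intro μ
  simp_rw [lintegral_eq_lintegral_meas_lt _ (Eventually.of_forall h_nonneg)
    h_lsc.measurable.aemeasurable]
  refine le_trans (lintegral_mono fun s => ?_) (lintegral_liminf_le fun ν =>
    Antitone.measurable fun s r hsr => measure_mono fun x hx => lt_of_le_of_lt hsr hx)
  exact ProbabilityMeasure.le_liminf_measure_open_of_tendsto tendsto_id (h_lsc.isOpen_preimage s)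

lemma lowerSemicontinuous_lintegral {g : Ω → ℝ≥0∞} (hg : LowerSemicontinuous g) :
    LowerSemicontinuous fun μ : ProbabilityMeasure Ω => ∫⁻ x, g x ∂(μ : Measure Ω) := by
  have g_eq : g = fun x => ⨆ n : ℕ, min (g x) n := by
    funext x
    rw [← inf_iSup_eq, ENNReal.iSup_natCast, inf_top_eq]
  have integral_eq : (fun μ : ProbabilityMeasure Ω => ∫⁻ x, g x ∂(μ : Measure Ω)) =
      fun μ : ProbabilityMeasure Ω => ⨆ n : ℕ,
        ∫⁻ x, ENNReal.ofReal (min (g x) n).toReal ∂(μ : Measure Ω) := by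
    funext μ
    have hfin : ∀ x, ∀ n : ℕ, min (g x) n ≠ ⊤ := fun x n =>
      ne_top_of_le_ne_top (ENNReal.natCast_ne_top n) (min_le_right _ _)
    simp_rw [ENNReal.ofReal_toReal (hfin _ _)]
    conv_lhs => rw [g_eq]
    refine lintegral_iSup (fun n => hg.measurable.min measurable_const) ?_
    intro m n hmn x
    exact min_le_min le_rfl (Nat.cast_le.2 hmn)
  rw [integral_eq]
  refine lowerSemicontinuous_iSup fun n =>
    lowerSemicontinuous_lintegral_ofReal (fun x => ENNReal.toReal_nonneg) ?_
  rw [lowerSemicontinuous_iff_isOpen_preimage]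
  intro s
  rcases lt_or_ge s 0 with hs | hs
  · convert isOpen_univ
    ext x
    simpa using hs.trans_le ENNReal.toReal_nonneg
  · convert (hg.inf (lowerSemicontinuous_const (z := (n : ℝ≥0∞)))).isOpen_preimage (ENNReal.ofReal s)
      using 1
    ext x
    exact (ENNReal.ofReal_lt_iff_lt_toReal hs
      (ne_top_of_le_ne_top (ENNReal.natCast_ne_top n) (min_le_right _ _))).symm

lemma isClosed_setOf_measure_compl_eq_zero {A : Set Ω} (hA : IsClosed A) :
    IsClosed {μ : ProbabilityMeasure Ω | (μ : Measure Ω) Aᶜ = 0} := by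
  convert (lowerSemicontinuous_lintegral
    (hA.isOpen_compl.lowerSemicontinuous_indicator (zero_le_one' ℝ≥0∞))).isClosed_preimage 0 using 1
  ext μ
  simp [lintegral_indicator hA.isOpen_compl.measurableSet]

lemma isCompact_setOf_measure_compl_eq_zero [T2Space Ω] {A : Set Ω} (hA : IsCompact A) :
    IsCompact {μ : ProbabilityMeasure Ω | (μ : Measure Ω) Aᶜ = 0} := by
  rw [← (isClosed_setOf_measure_compl_eq_zero hA.isClosed).closure_eq]
  refine isCompact_closure_of_isTightMeasureSet
    (isTightMeasureSet_iff_exists_isCompact_measure_compl_le.2 fun ε _ => ⟨A, hA, ?_⟩)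
  rintro _ ⟨μ, hμ, rfl⟩
  exact le_of_eq_of_le hμ zero_le

end WeakTopology

section Potential

variable {t : ℕ} {f : ℝ≥0 → ℝ≥0∞}

lemma lowerSemicontinuous_kernel (hf : LowerSemicontinuous f) :
    LowerSemicontinuous fun p : EuclideanSpace ℝ (Fin t) × EuclideanSpace ℝ (Fin t) =>
      f (nndist p.1 p.2) :=
  hf.comp (g := fun p : EuclideanSpace ℝ (Fin t) × EuclideanSpace ℝ (Fin t) =>
    nndist p.1 p.2) (by fun_prop)

/-- The principle of descent: the potential is jointly lower semicontinuous in the point and the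
measure. -/
lemma lowerSemicontinuous_potential (hf : LowerSemicontinuous f) :
    LowerSemicontinuous fun p : ProbabilityMeasure (EuclideanSpace ℝ (Fin t)) ×
      EuclideanSpace ℝ (Fin t) => potential f (p.1 : Measure (EuclideanSpace ℝ (Fin t))) p.2 := by
  have hcont : Continuous fun p : ProbabilityMeasure (EuclideanSpace ℝ (Fin t)) ×
      EuclideanSpace ℝ (Fin t) => (diracProba p.2).prod p.1 :=
    ProbabilityMeasure.continuous_prod.comp
      ((continuous_diracProba.comp continuous_snd).prodMk continuous_fst)
  convert (lowerSemicontinuous_lintegral (lowerSemicontinuous_kernel hf)).comp hcont using 1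
  funext p
  have hmeas := (lowerSemicontinuous_kernel (t := t) hf).measurable
  simp only [Function.comp_apply, ProbabilityMeasure.toMeasure_prod, potential]
  rw [lintegral_prod _ hmeas.aemeasurable]
  simp only [diracProba, ProbabilityMeasure.coe_mk]
  rw [lintegral_dirac]

lemma lintegral_potential_comm (hf : LowerSemicontinuous f)
    (μ ν : Measure (EuclideanSpace ℝ (Fin t))) [SFinite μ] [SFinite ν] :
    ∫⁻ x, potential f μ x ∂ν = ∫⁻ x, potential f ν x ∂μ := by
  unfold potential
  rw [lintegral_lintegral_swap (lowerSemicontinuous_kernel hf).measurable.aemeasurable]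
  simp_rw [nndist_comm]

end Potential
section CountingMeasure

variable {t : ℕ}

lemma isProbabilityMeasure_countingMeasure {N : ℕ} (hN : N ≠ 0)
    (ω : Fin N → EuclideanSpace ℝ (Fin t)) : IsProbabilityMeasure (countingMeasure ω) := by
  constructor
  simp [countingMeasure, ENNReal.inv_mul_cancel (Nat.cast_ne_zero.2 hN) (ENNReal.natCast_ne_top N)]

lemma countingMeasure_compl_eq_zero {A : Set (EuclideanSpace ℝ (Fin t))} (hA : MeasurableSet A)
    {N : ℕ} {ω : Fin N → EuclideanSpace ℝ (Fin t)} (hω : ∀ i, ω i ∈ A) :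
    countingMeasure ω Aᶜ = 0 := by
  simp [countingMeasure, hA.compl, hω]

lemma potential_countingMeasure {f : ℝ≥0 → ℝ≥0∞} (hf : LowerSemicontinuous f) {N : ℕ}
    (ω : Fin N → EuclideanSpace ℝ (Fin t)) (x : EuclideanSpace ℝ (Fin t)) :
    potential f (countingMeasure ω) x = discretePotential f ω x := by
  have hmeas : Measurable fun y => f (nndist x y) :=
    hf.measurable.comp (measurable_const.nndist measurable_id)
  simp only [potential, countingMeasure, discretePotential, lintegral_smul_measure,
    lintegral_finsetSum_measure, smul_eq_mul]
  congr 1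
  exact Finset.sum_congr rfl fun i _ => lintegral_dirac' _ hmeas

lemma integral_countingMeasure {N : ℕ} (ω : Fin N → EuclideanSpace ℝ (Fin t))
    (g : EuclideanSpace ℝ (Fin t) →ᵇ ℝ) :
    ∫ x, g x ∂(countingMeasure ω) = (N : ℝ)⁻¹ * ∑ i, g (ω i) := by
  rw [countingMeasure, integral_smul_measure,
    integral_finsetSum_measure fun i _ => g.integrable _]
  simp

/-- The normalized counting measure as a bundled probability measure (with a junk value for the
empty configuration). -/
def empiricalMeasure {N : ℕ} (ω : Fin N → EuclideanSpace ℝ (Fin t)) :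
    ProbabilityMeasure (EuclideanSpace ℝ (Fin t)) :=
  if hN : N = 0 then diracProba 0 else
    ⟨countingMeasure ω, isProbabilityMeasure_countingMeasure hN ω⟩

lemma coe_empiricalMeasure {N : ℕ} (hN : N ≠ 0) (ω : Fin N → EuclideanSpace ℝ (Fin t)) :
    (empiricalMeasure ω : Measure (EuclideanSpace ℝ (Fin t))) = countingMeasure ω := by
  simp [empiricalMeasure, hN]

lemma weaklyTendsto_countingMeasure_iff (ω : (N : ℕ) → Fin N → EuclideanSpace ℝ (Fin t))
    (μ : ProbabilityMeasure (EuclideanSpace ℝ (Fin t))) :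
    WeaklyTendsto (fun N => countingMeasure (ω N)) μ ↔
      Tendsto (fun N => empiricalMeasure (ω N)) atTop (𝓝 μ) := by
  rw [ProbabilityMeasure.tendsto_iff_forall_integral_tendsto]
  refine forall_congr' fun g => tendsto_congr' ?_
  filter_upwards [eventually_ne_atTop 0] with N hN
  rw [coe_empiricalMeasure hN]

/-- A probability vector is a limit of vectors of proportions of `N` objects. -/
lemma exists_tendsto_proportions {ι : Type*} [Fintype ι] (p : ι → ℝ) (hp : ∀ i, 0 ≤ p i)
    (hsum : ∑ i, p i = 1) :
    ∃ n : ℕ → ι → ℕ, (∀ N, ∑ i, n N i = N) ∧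
      ∀ i, Tendsto (fun N => (n N i : ℝ) / N) atTop (𝓝 (p i)) := by
  classical
  obtain ⟨i₀⟩ : Nonempty ι := by
    by_contra h
    rw [not_nonempty_iff] at h
    simp at hsum
  have hfloor : ∀ i, Tendsto (fun N : ℕ => (⌊p i * N⌋₊ : ℝ) / N) atTop (𝓝 (p i)) := fun i =>
    (tendsto_nat_floor_mul_div_atTop (hp i)).comp tendsto_natCast_atTop_atTop
  let rest : ℕ → ℕ := fun N => ∑ i ∈ Finset.univ.erase i₀, ⌊p i * N⌋₊
  have hrest_sum : p i₀ + ∑ i ∈ Finset.univ.erase i₀, p i = 1 := by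
    rw [Finset.add_sum_erase _ _ (Finset.mem_univ i₀), hsum]
  have hrest_le : ∀ N, rest N ≤ N := by
    intro N
    have : (rest N : ℝ) ≤ N := by
      calc (rest N : ℝ) = ∑ i ∈ Finset.univ.erase i₀, (⌊p i * N⌋₊ : ℝ) := by simp [rest]
        _ ≤ ∑ i ∈ Finset.univ.erase i₀, p i * N :=
          Finset.sum_le_sum fun i _ => Nat.floor_le (mul_nonneg (hp i) (Nat.cast_nonneg N))
        _ = (∑ i ∈ Finset.univ.erase i₀, p i) * N := by rw [Finset.sum_mul]
        _ ≤ 1 * N := by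
          gcongr
          linarith [hp i₀]
        _ = N := one_mul _
    exact_mod_cast this
  refine ⟨fun N i => if i = i₀ then N - rest N else ⌊p i * N⌋₊, fun N => ?_, fun i => ?_⟩
  · beta_reduce
    rw [← Finset.add_sum_erase _ _ (Finset.mem_univ i₀), if_pos rfl,
      Finset.sum_congr rfl fun i hi => if_neg (Finset.ne_of_mem_erase hi)]
    exact Nat.sub_add_cancel (hrest_le N)
  · by_cases hi : i = i₀
    · subst hi
      have hlim : Tendsto (fun N : ℕ => 1 - ∑ j ∈ Finset.univ.erase i, (⌊p j * N⌋₊ : ℝ) / N) atTop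
          (𝓝 (1 - ∑ j ∈ Finset.univ.erase i, p j)) :=
        tendsto_const_nhds.sub (tendsto_finsetSum _ fun j _ => hfloor j)
      rw [show p i = 1 - ∑ j ∈ Finset.univ.erase i, p j by linarith]
      refine hlim.congr' ?_
      filter_upwards [eventually_ne_atTop 0] with N hN
      have hN' : (N : ℝ) ≠ 0 := Nat.cast_ne_zero.2 hN
      rw [if_pos rfl, Nat.cast_sub (hrest_le N), _root_.sub_div, div_self hN', ← Finset.sum_div]
      simp [rest]
    · simpa [hi] using hfloor i

/-- A probability measure with finitely many atoms is a limit of empirical measures of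
configurations of its atoms. -/
lemma exists_tendsto_empiricalMeasure_map_simpleFunc
    (μ : ProbabilityMeasure (EuclideanSpace ℝ (Fin t)))
    (s : SimpleFunc (EuclideanSpace ℝ (Fin t)) (EuclideanSpace ℝ (Fin t))) :
    ∃ ω : (N : ℕ) → Fin N → EuclideanSpace ℝ (Fin t), (∀ N i, ω N i ∈ Set.range s) ∧
      Tendsto (fun N => empiricalMeasure (ω N)) atTop
        (𝓝 (μ.map s.measurable.aemeasurable)) := by
  obtain ⟨n, hn_sum, hn_lim⟩ := exists_tendsto_proportions
    (fun y : s.range => (μ : Measure (EuclideanSpace ℝ (Fin t))).real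
        (s ⁻¹' {(y : EuclideanSpace ℝ (Fin t))}))
    (fun _ => measureReal_nonneg) (by
      rw [Finset.sum_coe_sort s.range fun y =>
          (μ : Measure (EuclideanSpace ℝ (Fin t))).real (s ⁻¹' {y}),
        sum_measureReal_preimage_singleton _ fun y _ => s.measurableSet_fiber y]
      simp [SimpleFunc.coe_range])
  let e : ∀ N, Fin N ≃ Σ y : s.range, Fin (n N y) := fun N =>
    Fintype.equivOfCardEq (by simpa using (hn_sum N).symm)
  refine ⟨fun N i => ((e N i).1 : EuclideanSpace ℝ (Fin t)),
    fun N i => SimpleFunc.mem_range.1 (e N i).1.2, ?_⟩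
  rw [← weaklyTendsto_countingMeasure_iff]
  intro g
  have hint : ∫ x, g x ∂(μ.map s.measurable.aemeasurable : Measure (EuclideanSpace ℝ (Fin t))) =
      ∑ y : s.range, (μ : Measure (EuclideanSpace ℝ (Fin t))).real
        (s ⁻¹' {(y : EuclideanSpace ℝ (Fin t))}) * g y := by
    have hdecomp : ∀ x, g (s x) =
        ∑ y ∈ s.range, (s ⁻¹' {y}).indicator (fun _ => g y) x := fun x => by
      rw [Finset.sum_eq_single (s x)]
      · simp
      · intro y _ hy
        simp [hy.symm]
      · exact fun h => absurd (SimpleFunc.mem_range_self s x) h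
    rw [ProbabilityMeasure.toMeasure_map, integral_map s.measurable.aemeasurable
      g.continuous.aestronglyMeasurable,
      Finset.sum_coe_sort s.range fun y =>
          (μ : Measure (EuclideanSpace ℝ (Fin t))).real (s ⁻¹' {y}) * g y]
    simp_rw [hdecomp]
    rw [integral_finsetSum _ fun y _ => (integrable_const _).indicator (s.measurableSet_fiber y)]
    refine Finset.sum_congr rfl fun y _ => ?_
    rw [integral_indicator_const _ (s.measurableSet_fiber y), smul_eq_mul]
  rw [hint]
  refine (tendsto_finsetSum Finset.univ fun y _ => (hn_lim y).mul_const (g y)).congr fun N => ?_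
  rw [integral_countingMeasure,
    (e N).sum_comp fun p : Σ y : s.range, Fin (n N y) => g (p.1 : EuclideanSpace ℝ (Fin t)),
    Fintype.sum_sigma, Finset.mul_sum]
  refine Finset.sum_congr rfl fun y _ => ?_
  simp only [Finset.sum_const, Finset.card_univ, Fintype.card_fin, nsmul_eq_mul]
  ring

/-- Empirical measures of configurations in `A` come arbitrarily close to each probability measure
carried by `A`. -/
lemma eventually_exists_empiricalMeasure_mem {A : Set (EuclideanSpace ℝ (Fin t))}
    {μ : ProbabilityMeasure (EuclideanSpace ℝ (Fin t))}
    (hμ : (μ : Measure (EuclideanSpace ℝ (Fin t))) Aᶜ = 0)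
    {V : Set (ProbabilityMeasure (EuclideanSpace ℝ (Fin t)))} (hV : V ∈ 𝓝 μ) :
    ∀ᶠ N in atTop, ∃ ω : Fin N → EuclideanSpace ℝ (Fin t),
      (∀ i, ω i ∈ A) ∧ empiricalMeasure ω ∈ V := by
  obtain ⟨y₀, hy₀⟩ : A.Nonempty := by
    by_contra h
    rw [Set.not_nonempty_iff_eq_empty] at h
    simp [h] at hμ
  let s := SimpleFunc.approxOn (id : EuclideanSpace ℝ (Fin t) → _) measurable_id A y₀ hy₀
  have hs : Tendsto (fun n => μ.map (s n).measurable.aemeasurable) atTop (𝓝 μ) := by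
    rw [ProbabilityMeasure.tendsto_iff_forall_integral_tendsto]
    intro g
    simp_rw [ProbabilityMeasure.toMeasure_map, integral_map (s _).measurable.aemeasurable
      g.continuous.aestronglyMeasurable]
    refine tendsto_integral_of_dominated_convergence (fun _ => ‖g‖)
      (fun n => (g.continuous.measurable.comp (s n).measurable).aestronglyMeasurable)
      (integrable_const _) (fun n => Eventually.of_forall fun x => g.norm_coe_le_norm _) ?_
    have hae : ∀ᵐ x ∂(μ : Measure (EuclideanSpace ℝ (Fin t))), x ∈ A := hμ
    filter_upwards [hae] with x hx
    exact (g.continuous.tendsto x).comp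
      (SimpleFunc.tendsto_approxOn measurable_id hy₀ (subset_closure hx))
  obtain ⟨n, hn⟩ := (hs.eventually (interior_mem_nhds.2 hV)).exists
  obtain ⟨ω, hω, hlim⟩ := exists_tendsto_empiricalMeasure_map_simpleFunc μ (s n)
  filter_upwards [hlim.eventually (mem_interior_iff_mem_nhds.1 hn)] with N hN
  refine ⟨ω N, fun i => ?_, hN⟩
  obtain ⟨x, hx⟩ := hω N i
  exact hx ▸ SimpleFunc.approxOn_mem measurable_id hy₀ n x

end CountingMeasure
section Polarization

variable {t : ℕ} {A : Set (EuclideanSpace ℝ (Fin t))} {f : ℝ≥0 → ℝ≥0∞} {W : ℝ≥0∞}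

lemma lintegral_eq_of_eq_on {ν : Measure (EuclideanSpace ℝ (Fin t))} [IsProbabilityMeasure ν]
    (hν : ν Aᶜ = 0) {u : EuclideanSpace ℝ (Fin t) → ℝ≥0∞} (hu : ∀ x ∈ A, u x = W) :
    ∫⁻ x, u x ∂ν = W := by
  have hae : ∀ᵐ x ∂ν, x ∈ A := hν
  rw [lintegral_congr_ae (g := fun _ => W) (hae.mono hu)]
  simp

variable {μ : ProbabilityMeasure (EuclideanSpace ℝ (Fin t))}

lemma lintegral_potential_eq (hf : LowerSemicontinuous f)
    (hW : ∀ x ∈ A, potential f (μ : Measure (EuclideanSpace ℝ (Fin t))) x = W)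
    {ν : Measure (EuclideanSpace ℝ (Fin t))} [IsProbabilityMeasure ν] (hν : ν Aᶜ = 0) :
    ∫⁻ x, potential f ν x ∂(μ : Measure (EuclideanSpace ℝ (Fin t))) = W := by
  rw [lintegral_potential_comm hf]
  exact lintegral_eq_of_eq_on hν hW

lemma polarization_le (hf : LowerSemicontinuous f)
    (hμ : (μ : Measure (EuclideanSpace ℝ (Fin t))) Aᶜ = 0)
    (hW : ∀ x ∈ A, potential f (μ : Measure (EuclideanSpace ℝ (Fin t))) x = W)
    (hA : MeasurableSet A) {N : ℕ} (hN : N ≠ 0) {ω : Fin N → EuclideanSpace ℝ (Fin t)}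
    (hω : ∀ i, ω i ∈ A) : polarization f A ω ≤ W := by
  have := isProbabilityMeasure_countingMeasure hN ω
  have hae : ∀ᵐ x ∂(μ : Measure (EuclideanSpace ℝ (Fin t))), x ∈ A := hμ
  calc polarization f A ω
      = ∫⁻ _, polarization f A ω ∂(μ : Measure (EuclideanSpace ℝ (Fin t))) := by simp
    _ ≤ ∫⁻ x, potential f (countingMeasure ω) x ∂(μ : Measure (EuclideanSpace ℝ (Fin t))) := by
        refine lintegral_mono_ae (hae.mono fun x hx => ?_)
        rw [potential_countingMeasure hf]
        exact iInf₂_le x hx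
    _ = W := lintegral_potential_eq hf hW (countingMeasure_compl_eq_zero hA hω)

lemma maxPolarization_le (hf : LowerSemicontinuous f)
    (hμ : (μ : Measure (EuclideanSpace ℝ (Fin t))) Aᶜ = 0)
    (hW : ∀ x ∈ A, potential f (μ : Measure (EuclideanSpace ℝ (Fin t))) x = W)
    (hA : MeasurableSet A) {N : ℕ} (hN : N ≠ 0) : maxPolarization f A N ≤ W :=
  iSup₂_le fun _ hω => polarization_le hf hμ hW hA hN hω

lemma eventually_forall_lt_potential (hf : LowerSemicontinuous f) (hA : IsCompact A)
    (hW : ∀ x ∈ A, potential f (μ : Measure (EuclideanSpace ℝ (Fin t))) x = W)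
    {c : ℝ≥0∞} (hc : c < W) :
    ∀ᶠ ν : ProbabilityMeasure (EuclideanSpace ℝ (Fin t)) in 𝓝 μ,
      ∀ x ∈ A, c < potential f (ν : Measure (EuclideanSpace ℝ (Fin t))) x :=
  hA.eventually_forall_of_forall_eventually fun x hx =>
    lowerSemicontinuous_potential hf (μ, x) c (hc.trans_eq (hW x hx).symm)

lemma le_polarization_of_forall_lt_potential (hf : LowerSemicontinuous f) {c : ℝ≥0∞} {N : ℕ}
    (hN : N ≠ 0) {ω : Fin N → EuclideanSpace ℝ (Fin t)}
    (h : ∀ x ∈ A, c < potential f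
      (empiricalMeasure ω : Measure (EuclideanSpace ℝ (Fin t))) x) :
    c ≤ polarization f A ω := by
  refine le_iInf₂ fun x hx => ?_
  rw [← potential_countingMeasure hf, ← coe_empiricalMeasure hN]
  exact (h x hx).le

lemma tendsto_polarization_of_tendsto (hf : LowerSemicontinuous f) (hA : IsCompact A)
    (hμ : (μ : Measure (EuclideanSpace ℝ (Fin t))) Aᶜ = 0)
    (hW : ∀ x ∈ A, potential f (μ : Measure (EuclideanSpace ℝ (Fin t))) x = W)
    {ω : (N : ℕ) → Fin N → EuclideanSpace ℝ (Fin t)} (hω : ∀ N i, ω N i ∈ A)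
    (hlim : Tendsto (fun N => empiricalMeasure (ω N)) atTop (𝓝 μ)) :
    Tendsto (fun N => polarization f A (ω N)) atTop (𝓝 W) := by
  refine tendsto_of_le_liminf_of_limsup_le (le_of_forall_lt fun c hc => ?_) ?_
  · obtain ⟨d, hcd, hd⟩ := exists_between hc
    refine hcd.trans_le (le_liminf_of_le (h := ?_))
    filter_upwards [hlim.eventually (eventually_forall_lt_potential hf hA hW hd),
      eventually_ne_atTop 0] with N hN hN0
    exact le_polarization_of_forall_lt_potential hf hN0 hN
  · refine limsup_le_of_le (h := ?_)
    filter_upwards [eventually_ne_atTop 0] with N hN0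
    exact polarization_le hf hμ hW hA.measurableSet hN0 (hω N)

lemma tendsto_maxPolarization (hf : LowerSemicontinuous f) (hA : IsCompact A)
    (hμ : (μ : Measure (EuclideanSpace ℝ (Fin t))) Aᶜ = 0)
    (hW : ∀ x ∈ A, potential f (μ : Measure (EuclideanSpace ℝ (Fin t))) x = W) :
    Tendsto (fun N => maxPolarization f A N) atTop (𝓝 W) := by
  refine tendsto_of_le_liminf_of_limsup_le (le_of_forall_lt fun c hc => ?_) ?_
  · obtain ⟨d, hcd, hd⟩ := exists_between hc
    refine hcd.trans_le (le_liminf_of_le (h := ?_))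
    filter_upwards [eventually_exists_empiricalMeasure_mem hμ
      (eventually_forall_lt_potential hf hA hW hd), eventually_ne_atTop 0] with N hN hN0
    obtain ⟨ω, hω, hlt⟩ := hN
    exact le_iSup₂_of_le ω hω (le_polarization_of_forall_lt_potential hf hN0 hlt)
  · refine limsup_le_of_le (h := ?_)
    filter_upwards [eventually_ne_atTop 0] with N hN0
    exact maxPolarization_le hf hμ hW hA.measurableSet hN0

/-- Limit points of empirical measures with asymptotically maximal polarization have potential at
most `W` on `A`. -/
lemma potential_le_of_mapClusterPt (hf : LowerSemicontinuous f) (hA : MeasurableSet A)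
    (hμ : (μ : Measure (EuclideanSpace ℝ (Fin t))) Aᶜ = 0)
    (hsupp : ∀ x ∈ A, ∀ U : Set (EuclideanSpace ℝ (Fin t)), IsOpen U → x ∈ U →
      0 < (μ : Measure (EuclideanSpace ℝ (Fin t))) U)
    (hW : ∀ x ∈ A, potential f (μ : Measure (EuclideanSpace ℝ (Fin t))) x = W) (hW_top : W ≠ ⊤)
    {ω : (N : ℕ) → Fin N → EuclideanSpace ℝ (Fin t)} (hω : ∀ N i, ω N i ∈ A)
    (hlim : Tendsto (fun N => polarization f A (ω N)) atTop (𝓝 W))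
    {ν : ProbabilityMeasure (EuclideanSpace ℝ (Fin t))}
    (hν : MapClusterPt ν atTop fun N => empiricalMeasure (ω N))
    {x : EuclideanSpace ℝ (Fin t)} (hx : x ∈ A) :
    potential f (ν : Measure (EuclideanSpace ℝ (Fin t))) x ≤ W := by
  by_contra! hlt
  obtain ⟨c, hWc, hc⟩ := exists_between hlt
  have hnhds := lowerSemicontinuous_potential hf (ν, x) c hc
  rw [nhds_prod_eq, eventually_prod_iff] at hnhds
  obtain ⟨p, hp, q, hq, hpq⟩ := hnhds
  obtain ⟨U, hUq, hU, hxU⟩ := eventually_nhds_iff.1 hq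
  set m := (μ : Measure (EuclideanSpace ℝ (Fin t))) U with hm
  set m' := (μ : Measure (EuclideanSpace ℝ (Fin t))) Uᶜ with hm'
  have hmm' : m + m' = 1 := by
    rw [hm, hm', measure_add_measure_compl hU.measurableSet, measure_univ]
  have hae : ∀ᵐ y ∂(μ : Measure (EuclideanSpace ℝ (Fin t))), y ∈ A := hμ
  have hfreq : ∃ᶠ N in atTop, c * m + polarization f A (ω N) * m' ≤ W := by
    refine ((hν.frequently hp).and_eventually (eventually_ne_atTop 0)).mono ?_
    rintro N ⟨hpN, hN0⟩
    have := isProbabilityMeasure_countingMeasure hN0 (ω N)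
    rw [← lintegral_potential_eq hf hW (countingMeasure_compl_eq_zero hA (hω N)),
      ← lintegral_add_compl _ hU.measurableSet, hm, hm', ← setLIntegral_const,
      ← setLIntegral_const]
    refine add_le_add (setLIntegral_mono_ae' hU.measurableSet ?_)
      (setLIntegral_mono_ae' hU.measurableSet.compl ?_)
    · refine Eventually.of_forall fun y hy => ?_
      rw [← coe_empiricalMeasure hN0]
      exact (hpq hpN (hUq y hy)).le
    · refine hae.mono fun y hy _ => ?_
      rw [potential_countingMeasure hf]
      exact iInf₂_le y hy
  have hle : c * m + W * m' ≤ W := le_of_tendsto_of_frequently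
    (tendsto_const_nhds.add (ENNReal.Tendsto.mul_const hlim (Or.inr (measure_ne_top _ _)))) hfreq
  have hlt' : W * m < c * m :=
    ENNReal.mul_lt_mul_left (hsupp x hx U hU hxU).ne' (measure_ne_top _ _) hWc
  have : W < W := calc
    W = W * m + W * m' := by rw [← mul_add, hmm', mul_one]
    _ < c * m + W * m' :=
      ENNReal.add_lt_add_right (ENNReal.mul_ne_top hW_top (measure_ne_top _ _)) hlt'
    _ ≤ W := hle
  exact lt_irrefl W this

end Polarization

theorem asymptotically_optimal_iff_weak_convergence
    {t : ℕ} (A : Set (EuclideanSpace ℝ (Fin t))) (hA : IsCompact A)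
    (f : ℝ≥0 → ℝ≥0∞) (hf : LowerSemicontinuous f)
    (μeq : Measure (EuclideanSpace ℝ (Fin t))) (hμeq : IsProbabilityMeasure μeq)
    (hμeqA : μeq Aᶜ = 0)
    (hA1 : ∃ μ : Measure (EuclideanSpace ℝ (Fin t)),
      IsProbabilityMeasure μ ∧ μ Aᶜ = 0 ∧ energy f μ < ⊤)
    (hA2min : ∀ ν : Measure (EuclideanSpace ℝ (Fin t)),
      IsProbabilityMeasure ν → ν Aᶜ = 0 → energy f μeq ≤ energy f ν)
    (hA2uniq : ∀ ν : Measure (EuclideanSpace ℝ (Fin t)),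
      IsProbabilityMeasure ν → ν Aᶜ = 0 → energy f ν = energy f μeq → ν = μeq)
    (hA3 : ∀ x ∈ A, ∀ U : Set (EuclideanSpace ℝ (Fin t)), IsOpen U → x ∈ U → 0 < μeq U)
    (W : ℝ≥0∞) (hW : 0 < W) (hA4 : ∀ x ∈ A, potential f μeq x = W)
    (ω : (N : ℕ) → Fin N → EuclideanSpace ℝ (Fin t)) (hω : ∀ N, ∀ i, ω N i ∈ A) :
    Tendsto (fun N => polarization f A (ω N) / maxPolarization f A N) atTop (𝓝 1) ↔
      WeaklyTendsto (fun N => countingMeasure (ω N)) μeq := by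
  let μ : ProbabilityMeasure (EuclideanSpace ℝ (Fin t)) := ⟨μeq, hμeq⟩
  have hμW : ∀ x ∈ A, potential f (μ : Measure (EuclideanSpace ℝ (Fin t))) x = W := hA4
  have henergy : energy f μeq = W := lintegral_eq_of_eq_on hμeqA hA4
  have hW_top : W ≠ ⊤ := by
    obtain ⟨ν, hν, hνA, hfin⟩ := hA1
    exact ne_top_of_le_ne_top hfin.ne (henergy ▸ hA2min ν hν hνA)
  have hmax := tendsto_maxPolarization hf hA (μ := μ) hμeqA hμW
  rw [show WeaklyTendsto (fun N => countingMeasure (ω N)) μeq ↔ _ from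
    weaklyTendsto_countingMeasure_iff ω μ]
  constructor
  · intro hratio
    have hlim : Tendsto (fun N => polarization f A (ω N)) atTop (𝓝 W) := by
      have hmul := ENNReal.Tendsto.mul hratio (Or.inl one_ne_zero) hmax (Or.inl hW.ne')
      rw [one_mul] at hmul
      refine hmul.congr' ?_
      filter_upwards [hmax.eventually_ne hW.ne', hmax.eventually_ne hW_top] with N h0 htop
      exact ENNReal.div_mul_cancel h0 htop
    refine (isCompact_setOf_measure_compl_eq_zero hA).tendsto_nhds_of_unique_mapClusterPt ?_ ?_
    · filter_upwards [eventually_ne_atTop 0] with N hN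
      rw [coe_empiricalMeasure hN]
      exact countingMeasure_compl_eq_zero hA.measurableSet (hω N)
    · intro ν hνA hν
      have hνA' : ∀ᵐ x ∂(ν : Measure (EuclideanSpace ℝ (Fin t))), x ∈ A := hνA
      refine Subtype.ext (hA2uniq ν inferInstance hνA
        (le_antisymm ?_ (hA2min ν inferInstance hνA)))
      calc energy f (ν : Measure (EuclideanSpace ℝ (Fin t)))
          ≤ ∫⁻ _, W ∂(ν : Measure (EuclideanSpace ℝ (Fin t))) :=
            lintegral_mono_ae (hνA'.mono fun x hx => potential_le_of_mapClusterPt hf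
              hA.measurableSet (μ := μ) hμeqA hA3 hμW hW_top hω hlim hν hx)
        _ = energy f μeq := by simp [henergy]
  · intro hlim
    have hpol := tendsto_polarization_of_tendsto hf hA (μ := μ) hμeqA hμW hω hlim
    have hdiv := ENNReal.Tendsto.div hpol (Or.inl hW.ne') hmax (Or.inl hW_top)
    rwa [ENNReal.div_self hW.ne' hW_top] at hdiv
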